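/- Let R be a commutative ring containing ℚ, t ∈ R, and suppose elements q_1, q_2, ..., q_m ∈ R satisfy the Monk-type recursion q_1 = p and p · q_i = i·t·q_i + q_{i+1} for 1 ≤ i ≤ m-1, where p ∈ R. Then p^k = Σ_{j=1}^{k} S(k,j) t^{k-j} q_j for all 1 ≤ k ≤ m, where S(k,j) are Stirling numbers of the second kind. -/

import Mathlib

/-- Stirling numbers of the second kind. -/
def stirling : ℕ → ℕ → ℕ
  | 0, 0 => 1
  | 0, _ + 1 => 0
  | _ + 1, 0 => 0
  | n + 1, k + 1 => (k + 1) * stirling n (k + 1) + stirling n k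

/-!
Prepend `q 0 = 1` to the sequence: the recursion then also holds at `i = 0`. Writing
`w j = t ^ (k + 1 - j) * q j`, multiplication by `p` sends `t ^ (k - j) * q j` to
`j * w j + w (j + 1)`, which is exactly the rule by which a sum weighted by the numbers `S(k, j)`
becomes one weighted by the numbers `S(k + 1, j)`.
-/

open Finset

theorem stirling_eq_stirlingSecond : ∀ n k : ℕ, stirling n k = Nat.stirlingSecond n k
  | 0, 0 => rfl
  | 0, _ + 1 => rfl
  | _ + 1, 0 => rfl
  | n + 1, k + 1 => by
    rw [stirling, Nat.stirlingSecond_succ_succ, stirling_eq_stirlingSecond n (k + 1),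
      stirling_eq_stirlingSecond n k]

section Module

variable {M : Type*} [AddCommMonoid M]

theorem sum_range_stirlingSecond_smul_eq_sum_Icc {k : ℕ} (hk : 1 ≤ k) (w : ℕ → M) :
    ∑ j ∈ range (k + 1), Nat.stirlingSecond k j • w j =
      ∑ j ∈ Icc 1 k, Nat.stirlingSecond k j • w j := by
  obtain ⟨n, rfl⟩ := Nat.exists_eq_add_of_le' hk
  rw [range_eq_Ico, sum_eq_sum_Ico_succ_bot n.succ.succ_pos, Nat.stirlingSecond_succ_zero,
    zero_smul, zero_add, zero_add, Nat.succ_eq_add_one, Ico_add_one_right_eq_Icc]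

theorem sum_stirlingSecond_succ_smul (w : ℕ → M) (k : ℕ) :
    ∑ j ∈ range (k + 2), Nat.stirlingSecond (k + 1) j • w j =
      ∑ j ∈ range (k + 1), Nat.stirlingSecond k j • (j • w j + w (j + 1)) := by
  have shift : ∑ j ∈ range (k + 1), Nat.stirlingSecond k (j + 1) • (j + 1) • w (j + 1) =
      ∑ j ∈ range (k + 1), Nat.stirlingSecond k j • j • w j := by
    have h := sum_range_succ' (fun j ↦ Nat.stirlingSecond k j • j • w j) (k + 1)
    rw [sum_range_succ, Nat.stirlingSecond_eq_zero_of_lt k.lt_succ_self] at h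
    simpa only [zero_smul, smul_zero, add_zero] using h.symm
  calc ∑ j ∈ range (k + 2), Nat.stirlingSecond (k + 1) j • w j
      = ∑ j ∈ range (k + 1), Nat.stirlingSecond (k + 1) (j + 1) • w (j + 1) := by
        rw [sum_range_succ', Nat.stirlingSecond_succ_zero, zero_smul, add_zero]
    _ = ∑ j ∈ range (k + 1), Nat.stirlingSecond k (j + 1) • (j + 1) • w (j + 1) +
          ∑ j ∈ range (k + 1), Nat.stirlingSecond k j • w (j + 1) := by
        simp only [Nat.stirlingSecond_succ_succ, add_nsmul (w _), mul_nsmul, sum_add_distrib]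
    _ = ∑ j ∈ range (k + 1), Nat.stirlingSecond k j • (j • w j + w (j + 1)) := by
        simp only [shift, smul_add, sum_add_distrib]

theorem pow_smul_eq_sum_stirlingSecond {A : Type*} [Semiring A] [Module A M] {p t : A}
    (hpt : Commute p t) {v : ℕ → M} {k : ℕ}
    (hv : ∀ i < k, p • v i = i • t • v i + v (i + 1)) :
    p ^ k • v 0 = ∑ j ∈ range (k + 1), Nat.stirlingSecond k j • t ^ (k - j) • v j := by
  induction k with
  | zero => simp
  | succ k ih =>
    have smul_term : ∀ j ∈ range (k + 1), p • t ^ (k - j) • v j =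
        j • t ^ (k + 1 - j) • v j + t ^ (k + 1 - (j + 1)) • v (j + 1) := by
      intro j hj
      have hjk : j < k + 1 := mem_range.mp hj
      rw [smul_smul, (hpt.pow_right _).eq, mul_smul, hv j hjk, smul_add, smul_comm _ j,
        smul_smul, ← pow_succ, Nat.add_sub_add_right, Nat.sub_add_comm (Nat.le_of_lt_succ hjk)]
    calc p ^ (k + 1) • v 0
        = p • ∑ j ∈ range (k + 1), Nat.stirlingSecond k j • t ^ (k - j) • v j := by
          rw [pow_succ', mul_smul, ih fun i hi ↦ hv i (Nat.lt_succ_of_lt hi)]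
      _ = ∑ j ∈ range (k + 1), Nat.stirlingSecond k j • p • t ^ (k - j) • v j := by
          simp only [smul_sum, smul_comm p]
      _ = ∑ j ∈ range (k + 1), Nat.stirlingSecond k j •
            (j • t ^ (k + 1 - j) • v j + t ^ (k + 1 - (j + 1)) • v (j + 1)) :=
          sum_congr rfl fun j hj ↦ by rw [smul_term j hj]
      _ = ∑ j ∈ range (k + 2), Nat.stirlingSecond (k + 1) j • t ^ (k + 1 - j) • v j :=
          (sum_stirlingSecond_succ_smul (fun j ↦ t ^ (k + 1 - j) • v j) k).symm

end Module

theorem stmt7_general {A : Type*} [Semiring A] {m : ℕ} {t p : A} (hpt : Commute p t) {q : ℕ → A}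
    (h1 : q 1 = p)
    (hrec : ∀ i, 1 ≤ i → i ≤ m - 1 → p * q i = (i : A) * t * q i + q (i + 1)) :
    ∀ k, 1 ≤ k → k ≤ m →
      p ^ k = ∑ j ∈ Icc 1 k, (stirling k j : A) * t ^ (k - j) * q j := by
  intro k hk hkm
  let v : ℕ → A := Function.update q 0 1
  have v_of_pos {j : ℕ} (hj : 1 ≤ j) : v j = q j :=
    Function.update_of_ne (Nat.one_le_iff_ne_zero.mp hj) 1 q
  have v_zero : v 0 = 1 := Function.update_self 0 1 q
  have hv : ∀ i < k, p • v i = i • t • v i + v (i + 1) := by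
    intro i hik
    rw [v_of_pos i.succ_pos]
    rcases i.eq_zero_or_pos with rfl | hi
    · rw [v_zero, h1, zero_smul, zero_add, smul_eq_mul, mul_one]
    · simpa only [v_of_pos hi, smul_eq_mul, nsmul_eq_mul, mul_assoc]
        using hrec i hi (by omega)
  calc p ^ k = p ^ k • v 0 := by rw [v_zero, smul_eq_mul, mul_one]
    _ = ∑ j ∈ range (k + 1), Nat.stirlingSecond k j • t ^ (k - j) • v j :=
      pow_smul_eq_sum_stirlingSecond hpt hv
    _ = ∑ j ∈ Icc 1 k, Nat.stirlingSecond k j • t ^ (k - j) • v j :=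
      sum_range_stirlingSecond_smul_eq_sum_Icc hk _
    _ = ∑ j ∈ Icc 1 k, (stirling k j : A) * t ^ (k - j) * q j :=
      sum_congr rfl fun j hj ↦ by
        rw [v_of_pos (mem_Icc.mp hj).1, stirling_eq_stirlingSecond, smul_eq_mul, nsmul_eq_mul,
          mul_assoc]

/-- If `R` is a commutative ring containing `ℚ`, `t, p ∈ R`, and `q_1, ..., q_m ∈ R` satisfy
the Monk-type recursion `q_1 = p` and `p · q_i = i·t·q_i + q_{i+1}` for `1 ≤ i ≤ m-1`, then
`p^k = Σ_{j=1}^{k} S(k,j) t^{k-j} q_j` for all `1 ≤ k ≤ m`. -/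
theorem stmt7 {R : Type*} [CommRing R] [Algebra ℚ R] (m : ℕ) (t p : R) (q : ℕ → R)
    (h1 : q 1 = p)
    (hrec : ∀ i, 1 ≤ i → i ≤ m - 1 → p * q i = (i : R) * t * q i + q (i + 1)) :
    ∀ k, 1 ≤ k → k ≤ m →
      p ^ k = ∑ j ∈ Finset.Icc 1 k, (stirling k j : R) * t ^ (k - j) * q j :=
  stmt7_general (Commute.all p t) h1 hrec
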